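/- arXiv:1503.03388 — 2 statements merged into one kernel-verified Lean document; each statement's English description precedes it below -/
import Mathlib

section
/- At any equilibrium of the closed-loop shape dynamics, the following positivity conditions necessarily hold for every i: λ·cos α_0 + (1−λ)·sin κ_{ib}·sin(κ_i − α_i) > 0 and sin κ_{ib}·sin κ_i > 0. -/
open Real

/-!
By (E4), `sin κb = ± 1`, so a positive multiple of `sin κb` becomes positive after multiplication by
`sin κb`. The feedback bracket in (E2) is such a multiple, because (E5) turns the right-hand side of
(E2) into `(lam / ρb) * sin κb`; its product with `sin κb` is the first expression, since
`sin κb * sin (κb - α0) = cos α0`. The sum `sin κ + sin θ` is such a multiple by (E5); by (E1) the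
two angles have opposite cosines, hence sines equal up to sign, and the nonzero sum forces
`sin θ = sin κ`.
-/

theorem mul_pos_of_pos_mul_eq_pos_mul {R : Type*} [CommRing R] [LinearOrder R]
    [IsStrictOrderedRing R] {r c a s : R} (hr : 0 < r) (hc : 0 < c) (hs : s ≠ 0)
    (h : r * a = c * s) : 0 < s * a := by
  have hsq : r * (s * a) = c * s ^ 2 := by rw [mul_left_comm, h]; ring
  have hpos : 0 < r * (s * a) := hsq ▸ mul_pos hc (sq_pos_of_ne_zero hs)
  exact pos_of_mul_pos_right hpos hr.le

theorem sin_sq_eq_one_of_cos_eq_zero {x : ℝ} (hx : cos x = 0) : sin x ^ 2 = 1 := by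
  simp [sin_sq, hx]

theorem sin_mul_sin_sub_of_cos_eq_zero {x : ℝ} (hx : cos x = 0) (y : ℝ) :
    sin x * sin (x - y) = cos y := by
  calc sin x * sin (x - y) = sin x ^ 2 * cos y := by rw [sin_sub, hx]; ring
    _ = cos y := by rw [sin_sq_eq_one_of_cos_eq_zero hx, one_mul]

theorem sin_eq_sin_of_cos_add_cos_eq_zero {x y : ℝ} (hcos : cos x + cos y = 0)
    (hsin : sin x + sin y ≠ 0) : sin x = sin y := by
  have hsq : sin x ^ 2 = sin y ^ 2 := by
    rw [sin_sq, sin_sq, eq_neg_of_add_eq_zero_left hcos, neg_sq]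
  exact (sq_eq_sq_iff_eq_or_eq_neg.mp hsq).resolve_right fun h ↦ hsin (by rw [h, neg_add_cancel])

theorem mul_sin_pos_of_mul_sin_add_sin_pos {x y c : ℝ} (hcos : cos x + cos y = 0)
    (hpos : 0 < c * (sin x + sin y)) : 0 < c * sin x := by
  have hsin : sin x = sin y :=
    sin_eq_sin_of_cos_add_cos_eq_zero hcos (right_ne_zero_of_mul hpos.ne')
  rw [← hsin, ← two_mul, mul_left_comm] at hpos
  exact pos_of_mul_pos_right hpos zero_le_two

/-- The unindexed quantities are those of agent `i`, except that `θ` is the angle `θ (i + 1)` of its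
successor. -/
theorem stmt5_general {μ lam α0 α κ θ κb ρ ρb : ℝ} (hμ : 0 < μ) (hlam : 0 < lam)
    (hρ : 0 < ρ) (hρb : 0 < ρb) (hE1 : cos κ + cos θ = 0)
    (hE2 : μ * ((1 - lam) * sin (κ - α) + lam * sin (κb - α0)) = (lam / ρ) * (sin κ + sin θ))
    (hE4 : cos κb = 0) (hE5 : (1 / ρ) * (sin κ + sin θ) = (1 / ρb) * sin κb) :
    0 < lam * cos α0 + (1 - lam) * sin κb * sin (κ - α) ∧ 0 < sin κb * sin κ := by
  have hsin : sin κb ≠ 0 := by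
    rw [← sq_pos_iff, sin_sq_eq_one_of_cos_eq_zero hE4]; exact one_pos
  constructor
  · have hfeedback : μ * ((1 - lam) * sin (κ - α) + lam * sin (κb - α0)) = lam / ρb * sin κb := by
      linear_combination hE2 + lam * hE5
    calc 0 < sin κb * ((1 - lam) * sin (κ - α) + lam * sin (κb - α0)) :=
          mul_pos_of_pos_mul_eq_pos_mul hμ (div_pos hlam hρb) hsin hfeedback
      _ = lam * cos α0 + (1 - lam) * sin κb * sin (κ - α) := by
          rw [← sin_mul_sin_sub_of_cos_eq_zero hE4 α0]; ring
  · have hsum : 0 < sin κb * (sin κ + sin θ) :=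
      mul_pos_of_pos_mul_eq_pos_mul (one_div_pos.mpr hρ) (one_div_pos.mpr hρb) hsin hE5
    exact mul_sin_pos_of_mul_sin_add_sin_pos hE1 hsum

/-- Equilibrium hypotheses (E1)-(E5) of the closed-loop shape dynamics of the
`n`-agent beacon-referenced cyclic CB pursuit system, with indices mod `n`. -/
theorem stmt5 (n : ℕ) [NeZero n] (hn : 2 ≤ n)
    (μ lam α0 : ℝ) (α : ZMod n → ℝ)
    (hμ : 0 < μ) (hlam : lam ∈ Set.Ioo (0:ℝ) 1)
    (κ θ κb ρ ρb : ZMod n → ℝ)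
    (hρ : ∀ i, 0 < ρ i) (hρb : ∀ i, 0 < ρb i)
    (hE1 : ∀ i, cos (κ i) + cos (θ (i+1)) = 0)
    (hE2 : ∀ i, μ * ((1 - lam) * sin (κ i - α i) + lam * sin (κb i - α0))
          = (lam / ρ i) * (sin (κ i) + sin (θ (i+1))))
    (hE3 : ∀ i, (1 / ρ i) * (sin (κ i) + sin (θ (i+1)))
          = (1 / ρ (i-1)) * (sin (κ (i-1)) + sin (θ i)))
    (hE4 : ∀ i, cos (κb i) = 0)
    (hE5 : ∀ i, (1 / ρ i) * (sin (κ i) + sin (θ (i+1)))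
          = (1 / ρb i) * sin (κb i)) :
    ∀ i, lam * cos α0 + (1 - lam) * sin (κb i) * sin (κ i - α i) > 0 ∧
      sin (κb i) * sin (κ i) > 0 :=
  fun i ↦ stmt5_general hμ hlam.1 (hρ i) (hρb i) (hE1 i) (hE2 i) (hE4 i) (hE5 i)
end

section
/- (Proposition 2, Type 1 CCW case.) Fix μ > 0, λ ∈ (0,1), α_0, α⁺ ∈ ℝ, set δ = μ(cos α_0 + ((1−λ)/λ)·cos α⁺) and Ψ = μ(sin α_0 + ((1−λ)/λ)·sin α⁺), and assume δ > 0 (which holds under the Type 1 existence condition λ·cos α_0 + (1−λ)·cos α⁺ > 0). Consider the degree-7 polynomial P(x) = (x² + δ²)·(x² + λΨ·x + λδ²)·(x³ + λΨ·x² + δ²·x + (1−λ)·μ·sin α⁺·δ²) over ℂ. Then: (a) P has the pair of purely imaginary roots ±√−1·δ coming from its first factor; and (b) every root of the remaining degree-5 factor (x² + λΨx + λδ²)(x³ + λΨx² + δ²x + (1−λ)μ sin α⁺ δ²) has strictly negative real part if and only if sin α_0 > 0 and sin α⁺ > 0. -/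
open Real

/-!
The degree-5 factor is the product of a real quadratic and a real cubic, and a product is Hurwitz
exactly when both factors are. Splitting the cubic over `ℝ` into a linear and a quadratic factor
reduces its Routh–Hurwitz criterion to that of the quadratic, via the identity
`(p + r) * (q + p * r) - q * r = p * (q + r * (p + r))`. For the coefficients at hand, the Hurwitz
determinant of the cubic is `λ μ δ² sin α₀` and its constant term is `(1 - λ) μ δ² sin α⁺`.
-/

open Polynomial

/-- A real polynomial is *Hurwitz* (stable) if all its complex roots lie in the open left
half-plane. Roots are encoded through `aeval`, so the zero polynomial is not Hurwitz, whereas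
nonzero constants are. -/
def IsHurwitz (f : ℝ[X]) : Prop :=
  ∀ z : ℂ, aeval z f = 0 → z.re < 0

theorem isHurwitz_mul_iff {f g : ℝ[X]} : IsHurwitz (f * g) ↔ IsHurwitz f ∧ IsHurwitz g := by
  simp only [IsHurwitz, map_mul, mul_eq_zero, or_imp, forall_and]

theorem isHurwitz_X_add_C_iff {r : ℝ} : IsHurwitz (X + C r) ↔ 0 < r := by
  simp only [IsHurwitz, map_add, aeval_X, aeval_C, Complex.coe_algebraMap, add_eq_zero_iff_eq_neg,
    forall_eq, Complex.neg_re, Complex.ofReal_re, neg_lt_zero]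

theorem exists_add_eq_and_mul_eq {K : Type*} [Field K] [IsAlgClosed K] (p q : K) :
    ∃ u v : K, u + v = p ∧ u * v = q := by
  obtain ⟨f, g, hf, hg, hfg⟩ :=
    (isMonicOfDegree_add_add_two p q).eq_isMonicOfDegree_one_mul_isMonicOfDegree
  obtain ⟨u, rfl⟩ := isMonicOfDegree_one_iff.mp hf
  obtain ⟨v, rfl⟩ := isMonicOfDegree_one_iff.mp hg
  have h0 := congrArg (eval 0) hfg
  have h1 := congrArg (eval 1) hfg
  simp only [eval_add, eval_mul, eval_pow, eval_X, eval_C] at h0 h1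
  exact ⟨u, v, by linear_combination h0 - h1, by linear_combination -h0⟩

theorem pos_and_pos_iff_add_pos_and_mul_pos {R : Type*} [Ring R] [LinearOrder R]
    [IsStrictOrderedRing R] {x y : R} :
    0 < x ∧ 0 < y ↔ 0 < x + y ∧ 0 < x * y := by
  refine ⟨fun ⟨hx, hy⟩ ↦ ⟨add_pos hx hy, mul_pos hx hy⟩, fun ⟨hadd, hmul⟩ ↦ ?_⟩
  rcases mul_pos_iff.mp hmul with hpos | ⟨hx, hy⟩
  · exact hpos
  · exact absurd hadd (add_neg hx hy).not_gt

theorem re_pos_and_re_pos_iff {u v : ℂ} (hadd : (u + v).im = 0) (hmul : (u * v).im = 0) :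
    0 < u.re ∧ 0 < v.re ↔ 0 < (u + v).re ∧ 0 < (u * v).re := by
  rw [Complex.add_im] at hadd
  have hv : v.im = -u.im := by linarith
  rw [Complex.mul_im, hv] at hmul
  rw [Complex.add_re, Complex.mul_re, hv]
  have hcases : u.im * (v.re - u.re) = 0 := by linarith
  rcases mul_eq_zero.mp hcases with him | hre
  · rw [him, zero_mul, sub_zero, pos_and_pos_iff_add_pos_and_mul_pos]
  · rw [sub_eq_zero.mp hre, mul_neg, sub_neg_eq_add, and_self, ← two_mul]
    exact ⟨fun hu ↦ ⟨by positivity, add_pos_of_pos_of_nonneg (mul_pos hu hu) (mul_self_nonneg _)⟩,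
      fun ⟨htwice, _⟩ ↦ pos_of_mul_pos_right htwice zero_le_two⟩

theorem isHurwitz_quadratic_iff {p q : ℝ} :
    IsHurwitz (X ^ 2 + C p * X + C q) ↔ 0 < p ∧ 0 < q := by
  obtain ⟨u, v, hp, hq⟩ := exists_add_eq_and_mul_eq (p : ℂ) (q : ℂ)
  have hroots (z : ℂ) : aeval z (X ^ 2 + C p * X + C q) = 0 ↔ z = -u ∨ z = -v := by
    have hfactor : aeval z (X ^ 2 + C p * X + C q) = (z + u) * (z + v) := by
      simp only [map_add, map_mul, map_pow, aeval_X, aeval_C, Complex.coe_algebraMap]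
      linear_combination -z * hp - hq
    rw [hfactor, mul_eq_zero, add_eq_zero_iff_eq_neg, add_eq_zero_iff_eq_neg]
  calc IsHurwitz (X ^ 2 + C p * X + C q) ↔ 0 < u.re ∧ 0 < v.re := by
        simp only [IsHurwitz, hroots, or_imp, forall_and, forall_eq, Complex.neg_re, neg_lt_zero]
    _ ↔ 0 < (u + v).re ∧ 0 < (u * v).re :=
        re_pos_and_re_pos_iff (hp ▸ Complex.ofReal_im p) (hq ▸ Complex.ofReal_im q)
    _ ↔ 0 < p ∧ 0 < q := by rw [hp, hq, Complex.ofReal_re, Complex.ofReal_re]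

theorem exists_cubic_eq_quadratic_mul_linear (a b c : ℝ) :
    ∃ p q r : ℝ, a = p + r ∧ b = q + p * r ∧ c = q * r ∧
      X ^ 3 + C a * X ^ 2 + C b * X + C c = (X ^ 2 + C p * X + C q) * (X + C r) := by
  have hcubic : IsMonicOfDegree (X ^ 3 + C a * X ^ 2 + C b * X + C c) (1 + 2) := by
    rw [add_assoc, add_assoc]
    refine (isMonicOfDegree_X_pow ℝ 3).add_right ?_
    rw [← add_assoc]
    exact natDegree_quadratic_le.trans_lt (Nat.lt_succ_self 2)
  obtain ⟨f, g, hf, hg, hfg⟩ := hcubic.eq_isMonicOfDegree_two_mul_isMonicOfDegree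
  obtain ⟨p, q, rfl⟩ := isMonicOfDegree_two_iff.mp hf
  obtain ⟨r, rfl⟩ := isMonicOfDegree_one_iff.mp hg
  have h0 := congrArg (eval 0) hfg
  have h1 := congrArg (eval 1) hfg
  have hneg1 := congrArg (eval (-1)) hfg
  simp only [eval_add, eval_mul, eval_pow, eval_X, eval_C] at h0 h1 hneg1
  refine ⟨p, q, r, ?_, ?_, ?_, hfg⟩ <;> linarith

theorem routh_hurwitz_cubic_factor_iff {R : Type*} [CommRing R] [LinearOrder R]
    [IsStrictOrderedRing R] {p q r : R} :
    (0 < p ∧ 0 < q) ∧ 0 < r ↔ 0 < p + r ∧ 0 < q * r ∧ q * r < (p + r) * (q + p * r) := by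
  have hdet : (p + r) * (q + p * r) - q * r = p * (q + r * (p + r)) := by ring
  rw [← sub_pos (b := q * r), hdet]
  refine ⟨fun ⟨⟨hp, hq⟩, hr⟩ ↦ ⟨by positivity, by positivity, by positivity⟩, ?_⟩
  rintro ⟨ha, hc, hdet_pos⟩
  rcases mul_pos_iff.mp hc with ⟨hq, hr⟩ | ⟨hq, hr⟩
  · exact ⟨⟨pos_of_mul_pos_left hdet_pos (by positivity), hq⟩, hr⟩
  · have hfactor : q + r * (p + r) < 0 := add_neg hq (mul_neg_of_neg_of_pos hr ha)
    have hp : p < 0 := neg_of_mul_pos_left hdet_pos hfactor.le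
    exact absurd ha (add_neg hp hr).not_gt

theorem isHurwitz_cubic_iff {a b c : ℝ} :
    IsHurwitz (X ^ 3 + C a * X ^ 2 + C b * X + C c) ↔ 0 < a ∧ 0 < c ∧ c < a * b := by
  obtain ⟨p, q, r, rfl, rfl, rfl, hfactor⟩ := exists_cubic_eq_quadratic_mul_linear a b c
  rw [hfactor, isHurwitz_mul_iff, isHurwitz_quadratic_iff, isHurwitz_X_add_C_iff,
    routh_hurwitz_cubic_factor_iff]

theorem isHurwitz_quadratic_mul_cubic_iff {a b c d : ℝ} (hd : 0 < d) :
    IsHurwitz ((X ^ 2 + C a * X + C d) * (X ^ 3 + C a * X ^ 2 + C b * X + C c)) ↔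
      0 < a ∧ 0 < c ∧ c < a * b := by
  rw [isHurwitz_mul_iff, isHurwitz_quadratic_iff, isHurwitz_cubic_iff]
  exact ⟨And.right, fun h ↦ ⟨⟨h.1, hd⟩, h⟩⟩

theorem circling_routh_hurwitz_iff {K : Type*} [Field K] [LinearOrder K] [IsStrictOrderedRing K]
    {μ lam b s t : K} (hμ : 0 < μ) (hlam : lam ∈ Set.Ioo 0 1) (hb : 0 < b) :
    (0 < lam * (μ * (s + (1 - lam) / lam * t)) ∧ 0 < (1 - lam) * μ * t * b ∧
      (1 - lam) * μ * t * b < lam * (μ * (s + (1 - lam) / lam * t)) * b) ↔ 0 < s ∧ 0 < t := by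
  obtain ⟨hlam0, hlam1⟩ := hlam
  have hlam_compl : 0 < 1 - lam := sub_pos.mpr hlam1
  have hconst : (1 - lam) * μ * t * b = (1 - lam) * μ * b * t := by ring
  have hdet : lam * (μ * (s + (1 - lam) / lam * t)) * b - (1 - lam) * μ * t * b
      = lam * μ * b * s := by field_simp; ring
  rw [← sub_pos (b := (1 - lam) * μ * t * b), hdet, hconst,
    mul_pos_iff_of_pos_left (mul_pos (mul_pos hlam_compl hμ) hb),
    mul_pos_iff_of_pos_left (mul_pos (mul_pos hlam0 hμ) hb)]
  exact ⟨fun ⟨_, ht, hs⟩ ↦ ⟨hs, ht⟩, fun ⟨hs, ht⟩ ↦ ⟨by positivity, ht, hs⟩⟩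

theorem I_mul_sq_add_sq (w : ℂ) : (Complex.I * w) ^ 2 + w ^ 2 = 0 := by
  rw [mul_pow, Complex.I_sq, neg_one_mul, neg_add_cancel]

theorem stmt19_general (μ lam α0 αp : ℝ) (hμ : 0 < μ) (hlam : lam ∈ Set.Ioo (0 : ℝ) 1)
    (δ Ψ : ℝ)
    (_hδdef : δ = μ * (cos α0 + ((1 - lam) / lam) * cos αp))
    (hΨdef : Ψ = μ * (sin α0 + ((1 - lam) / lam) * sin αp))
    (hδ : δ ≠ 0) :
    (let P : ℂ → ℂ := fun z =>
        (z ^ 2 + ((δ ^ 2 : ℝ) : ℂ)) *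
        (z ^ 2 + ((lam * Ψ : ℝ) : ℂ) * z + ((lam * δ ^ 2 : ℝ) : ℂ)) *
        (z ^ 3 + ((lam * Ψ : ℝ) : ℂ) * z ^ 2 + ((δ ^ 2 : ℝ) : ℂ) * z
          + (((1 - lam) * μ * sin αp * δ ^ 2 : ℝ) : ℂ))
     (P (Complex.I * (δ : ℂ)) = 0 ∧ P (-(Complex.I * (δ : ℂ))) = 0) ∧
     ((∀ z : ℂ,
        (z ^ 2 + ((lam * Ψ : ℝ) : ℂ) * z + ((lam * δ ^ 2 : ℝ) : ℂ)) *
        (z ^ 3 + ((lam * Ψ : ℝ) : ℂ) * z ^ 2 + ((δ ^ 2 : ℝ) : ℂ) * z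
          + (((1 - lam) * μ * sin αp * δ ^ 2 : ℝ) : ℂ)) = 0 → z.re < 0)
       ↔ (0 < sin α0 ∧ 0 < sin αp))) := by
  refine ⟨⟨?_, ?_⟩, ?_⟩
  · simp only [Complex.ofReal_pow, I_mul_sq_add_sq, zero_mul]
  · simp only [neg_sq, Complex.ofReal_pow, I_mul_sq_add_sq, zero_mul]
  · have hδ2 : 0 < δ ^ 2 := by positivity
    rw [← circling_routh_hurwitz_iff hμ hlam hδ2, ← hΨdef,
      ← isHurwitz_quadratic_mul_cubic_iff (mul_pos hlam.1 hδ2)]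
    simp only [IsHurwitz, aeval_add, aeval_mul, aeval_X_pow, aeval_X, aeval_C,
      Complex.coe_algebraMap]

/-- Proposition 2, Type 1 CCW case: the characteristic polynomial has the pure
imaginary pair `±iδ`, and the remaining degree-5 factor has all roots in the
open left half-plane iff `sin α0 > 0` and `sin α⁺ > 0`. -/
theorem stmt19 (μ lam α0 αp : ℝ) (hμ : 0 < μ) (hlam : lam ∈ Set.Ioo (0:ℝ) 1)
    (δ Ψ : ℝ)
    (hδdef : δ = μ * (cos α0 + ((1 - lam) / lam) * cos αp))
    (hΨdef : Ψ = μ * (sin α0 + ((1 - lam) / lam) * sin αp))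
    (hδ : 0 < δ) :
    (let P : ℂ → ℂ := fun z =>
        (z ^ 2 + ((δ ^ 2 : ℝ) : ℂ)) *
        (z ^ 2 + ((lam * Ψ : ℝ) : ℂ) * z + ((lam * δ ^ 2 : ℝ) : ℂ)) *
        (z ^ 3 + ((lam * Ψ : ℝ) : ℂ) * z ^ 2 + ((δ ^ 2 : ℝ) : ℂ) * z
          + (((1 - lam) * μ * sin αp * δ ^ 2 : ℝ) : ℂ))
     (P (Complex.I * (δ : ℂ)) = 0 ∧ P (-(Complex.I * (δ : ℂ))) = 0) ∧
     ((∀ z : ℂ,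
        (z ^ 2 + ((lam * Ψ : ℝ) : ℂ) * z + ((lam * δ ^ 2 : ℝ) : ℂ)) *
        (z ^ 3 + ((lam * Ψ : ℝ) : ℂ) * z ^ 2 + ((δ ^ 2 : ℝ) : ℂ) * z
          + (((1 - lam) * μ * sin αp * δ ^ 2 : ℝ) : ℂ)) = 0 → z.re < 0)
       ↔ (0 < sin α0 ∧ 0 < sin αp))) := by
  exact stmt19_general μ lam α0 αp hμ hlam δ Ψ hδdef hΨdef hδ.ne'
end
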